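/- Let G be a group with a non-elementary acylindrical action on a tree T, and let H ≤ G be s-normal, i.e., gHg⁻¹ ∩ H is infinite for every g ∈ G. Then H is acylindrically arboreal. In particular every finite index subgroup of an acylindrically arboreal group is acylindrically arboreal. -/

import Mathlib

/-- An action of a group `G` by simplicial isometries (automorphisms) on a simplicial
tree, i.e. a connected acyclic simple graph, with the natural edge metric. -/
structure TreeAction (G : Type*) [Group G] where
  V : Type
  T : SimpleGraph V
  isTree : T.IsTree
  act : G →* (T ≃g T)

namespace TreeAction

variable {G : Type*} [Group G] (A : TreeAction G)

/-- The action fixes a point of the tree (the action is elliptic). -/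
def FixesPoint : Prop := ∃ x : A.V, ∀ g : G, A.act g x = x

/-- An element is elliptic if it fixes a point of the tree. -/
def Elliptic (g : G) : Prop := ∃ x : A.V, A.act g x = x

/-- The action has bounded orbits. -/
def BoundedOrbits : Prop := ∃ (x : A.V) (B : ℕ), ∀ g : G, A.T.dist x (A.act g x) ≤ B

/-- `(k, C)`-acylindricity: the pointwise stabiliser of any geodesic edge path of length
at least `k` (equivalently, in a tree, the common stabiliser of two points at distance
at least `k`) has at most `C` elements. -/
def KCAcylindrical (k C : ℕ) : Prop :=
  ∀ x y : A.V, k ≤ A.T.dist x y →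
    {g : G | A.act g x = x ∧ A.act g y = y}.Finite ∧
      {g : G | A.act g x = x ∧ A.act g y = y}.ncard ≤ C

/-- An action on a tree is acylindrical if it is `(k, C)`-acylindrical for some `k ≥ 0`,
`C ≥ 1`. -/
def Acylindrical : Prop := ∃ k C : ℕ, 1 ≤ C ∧ A.KCAcylindrical k C

/-- Bowditch's definition of acylindricity for the action on the tree. -/
def BowditchAcylindrical : Prop :=
  ∀ ε : ℕ, ∃ R N : ℕ, ∀ x y : A.V, R ≤ A.T.dist x y →
    {g : G | A.T.dist x (A.act g x) ≤ ε ∧ A.T.dist y (A.act g y) ≤ ε}.Finite ∧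
      {g : G | A.T.dist x (A.act g x) ≤ ε ∧ A.T.dist y (A.act g y) ≤ ε}.ncard ≤ N

end TreeAction

/-- A group is virtually cyclic if it has a cyclic subgroup of finite index. -/
def IsVirtuallyCyclic (G : Type*) [Group G] : Prop :=
  ∃ H : Subgroup G, H.FiniteIndex ∧ IsCyclic H

namespace TreeAction

variable {G : Type*} [Group G] (A : TreeAction G)

/-- The action is non-elementary: unbounded orbits and the group is not virtually
cyclic. -/
def NonElementary : Prop := ¬ A.BoundedOrbits ∧ ¬ IsVirtuallyCyclic G

/-- The action fixes a bi-infinite geodesic line setwise. -/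
def FixesLine : Prop :=
  ∃ ℓ : ℤ → A.V, (∀ m n : ℤ, (A.T.dist (ℓ m) (ℓ n) : ℤ) = |m - n|) ∧
    ∀ g : G, (fun v => A.act g v) '' Set.range ℓ = Set.range ℓ

end TreeAction

/-- A group is acylindrically arboreal if it admits a non-elementary acylindrical
action on a simplicial tree. -/
def AcylindricallyArboreal (G : Type*) [Group G] : Prop :=
  ∃ A : TreeAction G, A.Acylindrical ∧ A.NonElementary

/-- Property (FA⁻): every action on a simplicial tree either fixes a point or fixes a
bi-infinite geodesic setwise. -/
def PropertyFAMinus (G : Type*) [Group G] : Prop :=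
  ∀ A : TreeAction G, A.FixesPoint ∨ A.FixesLine

/-- The conjugate `g H g⁻¹` of a subgroup. -/
def conjSubgroup {G : Type*} [Group G] (g : G) (H : Subgroup G) : Subgroup G :=
  H.map (MulAut.conj g).toMonoidHom

/-- A subgroup `H ≤ G` is s-normal if `gHg⁻¹ ∩ H` is infinite for every `g ∈ G`. -/
def SNormal {G : Type*} [Group G] (H : Subgroup G) : Prop :=
  ∀ g : G, Infinite (conjSubgroup g H ⊓ H : Subgroup G)

/-!
If `H` moved some vertex `x` by at most `B`, every element of `gHg⁻¹ ∩ H` would move `x` and `g • x`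
by at most `B`. For `g • x` far from `x` such elements move two deep, distant vertices of the
geodesic from `x` to `g • x` inside that geodesic, so acylindricity leaves only finitely many of
them, against s-normality.

If `H` were virtually cyclic, an s-normal cyclic subgroup `⟨h⟩` would remain. It has unbounded
orbits, so `h` translates along an axis, and every `g` conjugates a nontrivial power of `h` to
another one, hence preserves that axis. After correction by a power of `h`, an element of the group
moves a long segment of the axis into a fixed finite set, so acylindricity forces `⟨h⟩` to have
finite index in the whole group, which is then virtually cyclic.
-/

section Tree

open SimpleGraph

variable {V V' : Type*} {T : SimpleGraph V}

theorem edist_iso_apply_le {T' : SimpleGraph V'} (f : T ≃g T') (x y : V) :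
    T'.edist (f x) (f y) ≤ T.edist x y :=
  le_iInf fun w => (edist_le (w.map f.toHom)).trans_eq (by rw [Walk.length_map])

theorem dist_iso_apply {T' : SimpleGraph V'} (f : T ≃g T') (x y : V) :
    T'.dist (f x) (f y) = T.dist x y := by
  have hle : T.edist x y ≤ T'.edist (f x) (f y) := by
    simpa using edist_iso_apply_le f.symm (f x) (f y)
  exact congrArg ENat.toNat ((edist_iso_apply_le f x y).antisymm hle)

/-- The vertex `v` lies on a geodesic of the graph `T` from `a` to `c`. This is the only form in
which geodesics are used: for fixed `a` and `c` it describes the vertices of the segment. -/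
def Between (T : SimpleGraph V) (a v c : V) : Prop :=
  T.dist a v + T.dist v c = T.dist a c

namespace Between

variable {a b c d v : V}

theorem left (T : SimpleGraph V) (a c : V) : Between T a a c := by
  simp [Between]

theorem symm (h : Between T a v c) : Between T c v a := by
  grind [Between, SimpleGraph.dist_comm]

theorem trans_right (hT : T.Connected) (h : Between T a b d) (h' : Between T b c d) :
    Between T a c d := by
  have := hT.dist_triangle (u := a) (v := b) (w := c)
  have := hT.dist_triangle (u := a) (v := c) (w := d)
  unfold Between at *
  omega

theorem of_mem_support (hT : T.Connected) {p : T.Walk a c} (hp : p.length = T.dist a c)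
    (hv : v ∈ p.support) : Between T a v c := by
  classical
  have hlength := congrArg Walk.length (p.take_spec hv)
  have := dist_le (p.takeUntil v hv)
  have := dist_le (p.dropUntil v hv)
  have := hT.dist_triangle (u := a) (v := v) (w := c)
  rw [Walk.length_append] at hlength
  unfold Between
  omega

theorem mem_support (hT : T.IsTree) (h : Between T a v c) (w : T.Walk a c) : v ∈ w.support := by
  classical
  obtain ⟨p, hp⟩ := hT.connected.exists_walk_length_eq_dist a v
  obtain ⟨q, hq⟩ := hT.connected.exists_walk_length_eq_dist v c
  have hpath : (p.append q).IsPath :=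
    Walk.isPath_of_length_eq_dist _ (by rw [Walk.length_append, hp, hq, h])
  have hbypass : p.append q = w.bypass :=
    (hT.existsUnique_path a c).unique hpath w.bypass_isPath
  apply w.support_bypass_subset_support
  rw [← hbypass, Walk.mem_support_append_iff]
  exact .inl p.end_mem_support

/-- Geodesic triangles in a tree are tripods. -/
theorem left_or_right (hT : T.IsTree) (h : Between T a v c) (b : V) :
    Between T a v b ∨ Between T b v c := by
  obtain ⟨p, hp⟩ := hT.connected.exists_walk_length_eq_dist a b
  obtain ⟨q, hq⟩ := hT.connected.exists_walk_length_eq_dist b c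
  have hv := h.mem_support hT (p.append q)
  rw [Walk.mem_support_append_iff] at hv
  exact hv.imp (of_mem_support hT.connected hp) (of_mem_support hT.connected hq)

theorem concat (hT : T.IsTree) (h : Between T a b c) (h' : Between T b c d) (hbc : b ≠ c) :
    Between T a c d := by
  have hpos := hT.connected.pos_dist_of_ne hbc
  have hsplit := h.left_or_right hT d
  grind [Between, SimpleGraph.dist_comm]

theorem of_dist_lt (hT : T.IsTree) (h : Between T a v c) (ha : T.dist a b < T.dist a v)
    (hc : T.dist c d < T.dist v c) : Between T b v d := by
  have hbc : Between T b v c := (h.left_or_right hT b).resolve_left fun h' => by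
    unfold Between at h'
    omega
  refine (hbc.left_or_right hT d).resolve_right fun h' => ?_
  grind [Between, SimpleGraph.dist_comm]

theorem exists_between_succ (hT : T.IsTree) (x : ℤ → V) {m n : ℤ} (h : Between T (x m) v (x n)) :
    ∃ i, Between T (x i) v (x (i + 1)) := by
  wlog hmn : m ≤ n generalizing m n
  · exact this h.symm (le_of_not_ge hmn)
  induction n, hmn using Int.leInduction with
  | base =>
    have hv : x m = v := by
      rw [← hT.connected.dist_eq_zero_iff]
      simp only [Between, dist_self] at h
      omega
    exact ⟨m, hv ▸ left T _ _⟩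
  | succ n _ ih => exact (h.left_or_right hT (x n)).elim ih fun h' => ⟨n, h'⟩

end Between

theorem finite_setOf_between (hT : T.IsTree) (a c : V) : {v | Between T a v c}.Finite := by
  obtain ⟨p⟩ := hT.connected a c
  exact p.support.finite_toSet.subset fun v hv => hv.mem_support hT p

theorem exists_between_dist_eq (hT : T.Connected) {a c : V} {n : ℕ} (hn : n ≤ T.dist a c) :
    ∃ v, Between T a v c ∧ T.dist a v = n := by
  obtain ⟨p, hp⟩ := hT.exists_walk_length_eq_dist a c
  have hbetween := Between.of_mem_support hT hp (p.getVert_mem_support n)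
  have htake := dist_le (p.take n)
  have hdrop := dist_le (p.drop n)
  rw [Walk.take_length] at htake
  rw [Walk.drop_length] at hdrop
  refine ⟨p.getVert n, hbetween, ?_⟩
  unfold Between at hbetween
  omega

/-- Local geodesics in a tree are geodesics. -/
theorem between_zero_of_forall_between (hT : T.IsTree) {x : ℕ → V} (hne : ∀ i, x i ≠ x (i + 1))
    (hx : ∀ i, Between T (x i) (x (i + 1)) (x (i + 2))) (n : ℕ) :
    Between T (x 0) (x n) (x (n + 1)) := by
  induction n with
  | zero => exact Between.left T _ _
  | succ n ih => exact ih.concat hT (hx n) (hne n)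

end Tree

section Group

open MulAction

variable {G : Type*} [Group G]

theorem finite_setOf_smul_mem {X : Type*} [MulAction G X] {x : X}
    (hx : (stabilizer G x : Set G).Finite) {F : Set X} (hF : F.Finite) :
    {g : G | g • x ∈ F}.Finite := by
  refine Set.Finite.of_finite_fibers (· • x) (hF.subset (by rintro _ ⟨g, hg, rfl⟩; exact hg)) ?_
  rintro _ ⟨g, -, rfl⟩
  refine (hx.image (g * ·)).subset fun g' hg' => ⟨g⁻¹ * g', ?_, mul_inv_cancel_left g g'⟩
  have hfiber : g' • x = g • x := hg'.2
  rw [SetLike.mem_coe, mem_stabilizer_iff, mul_smul, hfiber, inv_smul_smul]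

theorem finiteIndex_of_forall_exists_mul_mem {K : Subgroup G} {S : Set G} (hS : S.Finite)
    (hK : ∀ g, ∃ k ∈ K, k * g ∈ S) : K.FiniteIndex := by
  refine Subgroup.finiteIndex_of_leftCoset_cover_const (s := hS.toFinset) (g := fun s => s⁻¹)
    (Set.eq_univ_of_forall fun g => ?_)
  obtain ⟨k, hk, hkg⟩ := hK g⁻¹
  refine Set.mem_biUnion (hS.mem_toFinset.mpr hkg) ?_
  rw [mem_leftCoset_iff]
  simpa using hk

theorem infinite_of_relIndex_ne_zero {K L : Subgroup G} (hKL : K.relIndex L ≠ 0) [Infinite L] :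
    Infinite K := by
  refine not_finite_iff_infinite.mp fun hK => not_finite_iff_infinite.mpr ‹Infinite L› ?_
  have : (K.subgroupOf L).FiniteIndex := ⟨hKL⟩
  have : Finite (K.subgroupOf L) :=
    ((Set.toFinite (K : Set G)).preimage L.subtype_injective.injOn).to_subtype
  exact (Subgroup.finite_iff_finite_and_finiteIndex (K.subgroupOf L)).mpr ⟨this, inferInstance⟩

theorem mem_conjSubgroup {g u : G} {H : Subgroup G} :
    u ∈ conjSubgroup g H ↔ g⁻¹ * u * g ∈ H := by
  refine ⟨?_, fun hu => ⟨_, hu, by simp [mul_assoc]⟩⟩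
  rintro ⟨v, hv, rfl⟩
  simpa [mul_assoc] using hv

namespace SNormal

variable {H L : Subgroup G}

theorem of_relIndex_ne_zero (hH : SNormal H) (hLH : L.relIndex H ≠ 0) : SNormal L := by
  intro g
  have := hH g
  have hconj : (conjSubgroup g L).relIndex (conjSubgroup g H) ≠ 0 := by
    rwa [conjSubgroup, conjSubgroup, Subgroup.relIndex_map_map_of_injective _ _
      (MulAut.conj g).injective]
  refine infinite_of_relIndex_ne_zero (L := conjSubgroup g H ⊓ H) (Subgroup.relIndex_inf_ne_zero
    (mt (Subgroup.relIndex_eq_zero_of_le_right inf_le_left) hconj)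
    (mt (Subgroup.relIndex_eq_zero_of_le_right inf_le_right) hLH))

theorem top [Infinite G] : SNormal (⊤ : Subgroup G) := by
  intro g
  have htop : conjSubgroup g ⊤ ⊓ ⊤ = (⊤ : Subgroup G) := by
    ext u
    simp [mem_conjSubgroup]
  rw [htop]
  exact Subgroup.topEquiv.toEquiv.infinite_iff.mpr ‹_›

theorem of_finiteIndex [Infinite G] [H.FiniteIndex] : SNormal H :=
  top.of_relIndex_ne_zero (by
    rw [Subgroup.relIndex_top_right]
    exact Subgroup.FiniteIndex.index_ne_zero)

theorem exists_conj_zpow_eq_zpow {h : G} (hh : SNormal (Subgroup.zpowers h)) (g : G) :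
    ∃ m n : ℤ, m ≠ 0 ∧ g * h ^ m * g⁻¹ = h ^ n := by
  have := hh g
  obtain ⟨⟨u, hconj, n, rfl⟩, hu⟩ :=
    exists_ne (1 : (conjSubgroup g (Subgroup.zpowers h) ⊓ Subgroup.zpowers h : Subgroup G))
  obtain ⟨m, hm⟩ := mem_conjSubgroup.mp hconj
  have hmn : g * h ^ m * g⁻¹ = h ^ n := by
    simp only at hm
    rw [hm]
    group
  refine ⟨m, n, ?_, hmn⟩
  rintro rfl
  rw [zpow_zero, mul_one, mul_inv_cancel] at hmn
  exact hu (Subtype.ext hmn.symm)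

end SNormal

theorem IsVirtuallyCyclic.of_finite [Finite G] : IsVirtuallyCyclic G :=
  ⟨⊥, inferInstance, inferInstance⟩

theorem IsVirtuallyCyclic.exists_zpowers_relIndex_ne_zero {H : Subgroup G}
    (hH : IsVirtuallyCyclic H) : ∃ h : G, (Subgroup.zpowers h).relIndex H ≠ 0 := by
  obtain ⟨K, hK, hcyclic⟩ := hH
  obtain ⟨h, hh⟩ := K.isCyclic_iff_exists_zpowers_eq_top.mp hcyclic
  refine ⟨h, ?_⟩
  have hmap : Subgroup.zpowers (h : G) = K.map H.subtype := by
    rw [← hh, MonoidHom.map_zpowers, Subgroup.coe_subtype]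
  rw [hmap, Subgroup.relIndex, Subgroup.subgroupOf, Subgroup.comap_map_eq_self_of_injective
    H.subtype_injective]
  exact hK.index_ne_zero

end Group

namespace TreeAction

open SimpleGraph

variable {G : Type*} [Group G] {A : TreeAction G} {k C : ℕ}

instance : MulAction G A.V := MulAction.compHom A.V A.act

theorem dist_smul_smul (g : G) (x y : A.V) : A.T.dist (g • x) (g • y) = A.T.dist x y :=
  dist_iso_apply (A.act g) x y

theorem between_smul_iff (g : G) {a v c : A.V} :
    Between A.T (g • a) (g • v) (g • c) ↔ Between A.T a v c := by
  simp only [Between, dist_smul_smul]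

theorem boundedOrbits_of_finite_orbit {x : A.V} (hx : (MulAction.orbit G x).Finite) :
    A.BoundedOrbits := by
  obtain ⟨B, hB⟩ := (hx.image (A.T.dist x)).bddAbove
  exact ⟨x, B, fun g => hB ⟨_, MulAction.mem_orbit x g, rfl⟩⟩

theorem KCAcylindrical.finite_setOf_smul_mem (hA : A.KCAcylindrical k C) {x y : A.V}
    (hxy : k ≤ A.T.dist x y) {F : Set A.V} (hF : F.Finite) :
    {g : G | g • x ∈ F ∧ g • y ∈ F}.Finite := by
  have hstab : (MulAction.stabilizer G (x, y) : Set G).Finite :=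
    (hA x y hxy).1.subset fun g hg => Prod.ext_iff.mp hg
  exact _root_.finite_setOf_smul_mem hstab (hF.prod hF)

theorem KCAcylindrical.finite_setOf_dist_smul_le (hA : A.KCAcylindrical k C) {B : ℕ} {x y : A.V}
    (hxy : k + 2 * B + 2 ≤ A.T.dist x y) :
    {g : G | A.T.dist x (g • x) ≤ B ∧ A.T.dist y (g • y) ≤ B}.Finite := by
  have hT := A.isTree
  obtain ⟨p, hp, hxp⟩ :=
    exists_between_dist_eq hT.connected (a := x) (c := y) (n := B + 1) (by omega)
  have hpy : A.T.dist x p + A.T.dist p y = A.T.dist x y := hp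
  obtain ⟨q, hq, hpq⟩ := exists_between_dist_eq hT.connected (a := p) (c := y) (n := k) (by omega)
  have hqy : A.T.dist p q + A.T.dist q y = A.T.dist p y := hq
  have hxq : Between A.T x q y := hp.trans_right hT.connected hq
  have hxqy : A.T.dist x q + A.T.dist q y = A.T.dist x y := hxq
  refine (hA.finite_setOf_smul_mem hpq.ge (finite_setOf_between hT x y)).subset fun g hg => ?_
  have hdeep {r : A.V} (hr : Between A.T x r y) (hxr : B < A.T.dist x r)
      (hry : B < A.T.dist r y) : Between A.T x (g • r) y := by
    refine ((between_smul_iff g).mpr hr).of_dist_lt hT ?_ ?_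
    · rw [A.T.dist_comm, dist_smul_smul]
      exact hg.1.trans_lt hxr
    · rw [A.T.dist_comm, dist_smul_smul]
      exact hg.2.trans_lt hry
  exact ⟨hdeep hp (by omega) (by omega), hdeep hxq (by omega) (by omega)⟩

/-- The restriction of an action on a tree to a subgroup. -/
def restrict (A : TreeAction G) (H : Subgroup G) : TreeAction H where
  V := A.V
  T := A.T
  isTree := A.isTree
  act := A.act.comp H.subtype

theorem Acylindrical.restrict (hA : A.Acylindrical) (H : Subgroup G) :
    (A.restrict H).Acylindrical := by
  obtain ⟨k, C, hC, hA⟩ := hA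
  refine ⟨k, C, hC, fun x y hxy => ?_⟩
  obtain ⟨hfinite, hcard⟩ := hA x y hxy
  have hinj := H.subtype_injective.injOn
    (s := {h : H | (A.restrict H).act h x = x ∧ (A.restrict H).act h y = y})
  have hmaps : Set.MapsTo H.subtype {h | (A.restrict H).act h x = x ∧ (A.restrict H).act h y = y}
    {g | A.act g x = x ∧ A.act g y = y} := fun _ hh => hh
  exact ⟨.of_injOn hmaps hinj hfinite,
    (Set.ncard_le_ncard_of_injOn _ hmaps hinj hfinite).trans hcard⟩

theorem _root_.SNormal.not_boundedOrbits_restrict {H : Subgroup G} (hH : SNormal H)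
    (hA : A.Acylindrical) (hub : ¬ A.BoundedOrbits) : ¬ (A.restrict H).BoundedOrbits := by
  obtain ⟨k, C, -, hA⟩ := hA
  rintro ⟨x, B, hB⟩
  change A.V at x
  have hbound (h : G) (hh : h ∈ H) : A.T.dist x (h • x) ≤ B := hB ⟨h, hh⟩
  obtain ⟨g, hg⟩ : ∃ g : G, k + 2 * B + 2 < A.T.dist x (g • x) := by
    by_contra! hfar
    exact hub ⟨x, _, hfar⟩
  refine Set.infinite_coe_iff.mp (hH g) ((hA.finite_setOf_dist_smul_le hg.le).subset ?_)
  rintro u ⟨hconj, hu⟩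
  refine ⟨hbound u hu, ?_⟩
  rw [← dist_smul_smul g⁻¹, inv_smul_smul, smul_smul, smul_smul]
  exact hbound _ (mem_conjSubgroup.mp hconj)

/-- The axis of `h`: the vertices moved by `h` along a geodesic. It is the usual axis when `h` acts
as a translation, and empty when `h` fixes a vertex or inverts an edge. -/
def axis (A : TreeAction G) (h : G) : Set A.V :=
  {v | v ≠ h • v ∧ Between A.T v (h • v) (h • h • v)}

section Axis

variable {g h : G} {p v : A.V}

theorem smul_mem_axis_conj_iff : g • v ∈ A.axis (g * h * g⁻¹) ↔ v ∈ A.axis h := by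
  have hconj (w : A.V) : (g * h * g⁻¹) • g • w = g • h • w := by
    rw [mul_smul, inv_smul_smul, mul_smul]
  simp only [axis, Set.mem_ofPred_eq, hconj, between_smul_iff, ne_eq, smul_left_cancel_iff]

theorem zpow_smul_mem_axis (hp : p ∈ A.axis h) (n : ℤ) : h ^ n • p ∈ A.axis h := by
  have hconj : h ^ n * h * (h ^ n)⁻¹ = h := by group
  rwa [← smul_mem_axis_conj_iff (g := h ^ n), hconj] at hp

theorem dist_pow_smul (hp : p ∈ A.axis h) (n : ℕ) :
    A.T.dist p (h ^ n • p) = n * A.T.dist p (h • p) := by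
  have hsucc (i : ℕ) (w : A.V) : h ^ (i + 1) • w = h ^ i • h • w := by rw [pow_succ, mul_smul]
  have hgeodesic (i : ℕ) : Between A.T p (h ^ i • p) (h ^ (i + 1) • p) := by
    have := between_zero_of_forall_between A.isTree (x := fun i => h ^ i • p)
      (fun i => by simpa only [hsucc, ne_eq, smul_left_cancel_iff] using hp.1)
      (fun i => by simpa only [hsucc, between_smul_iff] using hp.2) i
    simpa only [pow_zero, one_smul] using this
  induction n with
  | zero => simp
  | succ n ih => rw [← hgeodesic n, ih, hsucc, dist_smul_smul, Nat.succ_mul]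

theorem dist_zpow_smul_zpow_smul (hp : p ∈ A.axis h) (i j : ℤ) :
    A.T.dist (h ^ i • p) (h ^ j • p) = (j - i).natAbs * A.T.dist p (h • p) := by
  wlog hij : i ≤ j generalizing i j
  · rw [A.T.dist_comm, this j i (le_of_not_ge hij), ← Int.natAbs_neg, neg_sub]
  obtain ⟨n, rfl⟩ := Int.le.dest hij
  rw [zpow_add, mul_smul, dist_smul_smul, zpow_natCast, dist_pow_smul hp, add_sub_cancel_left,
    Int.natAbs_natCast]

theorem dist_zpow_smul (hp : p ∈ A.axis h) (n : ℤ) :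
    A.T.dist p (h ^ n • p) = n.natAbs * A.T.dist p (h • p) := by
  simpa only [zpow_zero, one_smul, sub_zero] using dist_zpow_smul_zpow_smul hp 0 n

theorem natAbs_le_dist_zpow_smul (hp : p ∈ A.axis h) (n : ℤ) :
    n.natAbs ≤ A.T.dist p (h ^ n • p) := by
  rw [dist_zpow_smul hp]
  exact Nat.le_mul_of_pos_right _ (A.isTree.connected.pos_dist_of_ne hp.1)

theorem mem_axis_zpow (hp : p ∈ A.axis h) {m : ℤ} (hm : m ≠ 0) : p ∈ A.axis (h ^ m) := by
  refine ⟨fun hfix => ?_, ?_⟩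
  · have := natAbs_le_dist_zpow_smul hp m
    rw [← hfix, dist_self] at this
    omega
  · rw [Between, dist_smul_smul, smul_smul, ← zpow_add, dist_zpow_smul hp, dist_zpow_smul hp,
      ← add_mul]
    congr 1
    omega

/-- The orbit of `v` is a geodesic, and its two ends stay at distance `dist p v` from those of the
orbit of `p`, so they can be moved onto them without passing `v`. -/
theorem exists_between_zpow_smul (p : A.V) (hv : v ∈ A.axis h) :
    ∃ i : ℤ, Between A.T (h ^ i • p) v (h ^ (i + 1) • p) := by
  have hbetween (n : ℤ) : Between A.T (h ^ (-n) • v) v (h ^ n • v) := by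
    rw [Between, A.T.dist_comm, dist_zpow_smul hv, dist_zpow_smul hv,
      dist_zpow_smul_zpow_smul hv, ← add_mul]
    congr 1
    omega
  let n : ℤ := A.T.dist p v + 1
  refine ((hbetween n).of_dist_lt A.isTree (b := h ^ (-n) • p) (d := h ^ n • p) ?_ ?_
    ).exists_between_succ A.isTree fun i => h ^ i • p
  · have := natAbs_le_dist_zpow_smul hv (-n)
    rw [dist_smul_smul, A.T.dist_comm, A.T.dist_comm (u := h ^ (-n) • v)]
    omega
  · have := natAbs_le_dist_zpow_smul hv n
    rw [dist_smul_smul, A.T.dist_comm]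
    omega

theorem exists_between_smul_of_conj_zpow (p : A.V) (hv : v ∈ A.axis h)
    {m n : ℤ} (hm : m ≠ 0) (hg : g * h ^ m * g⁻¹ = h ^ n) :
    ∃ i : ℤ, Between A.T (h ^ i • p) (g • v) (h ^ (i + 1) • p) := by
  have hgv : g • v ∈ A.axis (h ^ n) := hg ▸ smul_mem_axis_conj_iff.mpr (mem_axis_zpow hv hm)
  obtain ⟨j, hj⟩ := exists_between_zpow_smul p hgv
  simp only [← zpow_mul] at hj
  exact hj.exists_between_succ A.isTree fun i => h ^ i • p

/-- A vertex `p` of minimal displacement lies on the axis, unless `h` fixes it or inverts an edge at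
it: if `r` is the first step from `p` towards `h • p`, minimality at `r` prevents the geodesic from
`h • p` to `h • h • p` from backtracking. -/
theorem exists_sq_smul_eq_or_mem_axis (h : G) : ∃ p : A.V, h • h • p = p ∨ p ∈ A.axis h := by
  have hT := A.isTree
  have := hT.connected.nonempty
  let p : A.V := Function.argmin fun q : A.V => A.T.dist q (h • q)
  have hmin (q : A.V) : A.T.dist p (h • p) ≤ A.T.dist q (h • q) :=
    Function.argmin_le (fun q : A.V => A.T.dist q (h • q)) q
  by_cases hfix : p = h • p
  · exact ⟨p, .inl (by rw [← hfix, ← hfix])⟩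
  have hpos := hT.connected.pos_dist_of_ne hfix
  obtain ⟨r, hr, hpr⟩ := exists_between_dist_eq hT.connected hpos
  by_cases hrp : r = h • p
  · have hstep : A.T.dist (h • p) (h • h • p) = 1 := by rwa [dist_smul_smul, ← hrp]
    refine ⟨p, (hT.dist_eq_dist_add_one_of_adj p (dist_eq_one_iff_adj.mp hstep)).imp
      (fun hback => ?_) fun hforward => ⟨hfix, by rw [Between, hstep, hforward]⟩⟩
    rw [← hrp, hpr, hrp] at hback
    exact (hT.connected.dist_eq_zero_iff.mp (by omega)).symm
  · refine ⟨p, .inr ⟨hfix, ?_⟩⟩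
    have hphr : A.T.dist (h • p) (h • r) = 1 := by rw [dist_smul_smul, hpr]
    have hrhr : Between A.T r (h • p) (h • r) := by
      have := hmin r
      have := hT.connected.dist_triangle (u := r) (v := h • p) (w := h • r)
      unfold Between at hr ⊢
      omega
    have hhr : Between A.T (h • p) (h • r) (h • h • p) := (between_smul_iff h).mpr hr
    have hrhp : Between A.T r (h • p) (h • h • p) :=
      (hhr.symm.concat hT hrhr.symm (dist_eq_one_iff_adj.mp hphr).ne').symm
    exact hr.concat hT hrhp hrp

theorem finite_setOf_dist_le_and_exists_between_zpow_smul (hp : p ∈ A.axis h) (n : ℕ) :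
    {v | A.T.dist p v ≤ n ∧ ∃ i : ℤ, Between A.T (h ^ i • p) v (h ^ (i + 1) • p)}.Finite := by
  let N : ℤ := n + A.T.dist p (h • p)
  refine ((Set.finite_Icc (-N) N).biUnion fun i _ => finite_setOf_between A.isTree (h ^ i • p)
    (h ^ (i + 1) • p)).subset ?_
  rintro v ⟨hpv, i, hi⟩
  refine Set.mem_biUnion (Set.mem_Icc.mpr ?_) hi
  have hlength := dist_zpow_smul_zpow_smul hp i (i + 1)
  rw [add_sub_cancel_left, Int.natAbs_one, one_mul] at hlength
  have htriangle := A.isTree.connected.dist_triangle (u := p) (v := v) (w := h ^ i • p)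
  rw [A.T.dist_comm (u := v)] at htriangle
  have := natAbs_le_dist_zpow_smul hp i
  unfold Between at hi
  omega

end Axis

theorem boundedOrbits_restrict_zpowers {h : G} {p : A.V} (hp : h • h • p = p) :
    (A.restrict (Subgroup.zpowers h)).BoundedOrbits := by
  have hsq : h ^ (2 : ℤ) ∈ MulAction.stabilizer G p := by
    rwa [zpow_two, MulAction.mem_stabilizer_iff, mul_smul]
  refine boundedOrbits_of_finite_orbit (A := A.restrict _) (x := p)
    ((Set.toFinite ({p, h • p} : Set A.V)).subset ?_)
  have heven (m : ℤ) : h ^ (2 * m) • p = p := by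
    rw [zpow_mul]
    exact zpow_mem hsq m
  have hodd (m : ℤ) : h ^ (2 * m + 1) • p = h • p := by
    rw [add_comm, zpow_add, zpow_one, mul_smul, heven]
  rintro _ ⟨⟨_, n, rfl⟩, rfl⟩
  obtain ⟨m, rfl | rfl⟩ := n.even_or_odd'
  · exact .inl (heven m)
  · exact .inr (hodd m)

theorem _root_.SNormal.exists_mem_axis {h : G} (hh : SNormal (Subgroup.zpowers h))
    (hA : A.Acylindrical) (hub : ¬ A.BoundedOrbits) : ∃ p, p ∈ A.axis h := by
  obtain ⟨p, hp | hp⟩ := A.exists_sq_smul_eq_or_mem_axis h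
  · exact absurd (boundedOrbits_restrict_zpowers hp) (hh.not_boundedOrbits_restrict hA hub)
  · exact ⟨p, hp⟩

theorem _root_.SNormal.exists_between_smul {g h : G} {v : A.V}
    (hh : SNormal (Subgroup.zpowers h)) (p : A.V) (hv : v ∈ A.axis h) :
    ∃ i : ℤ, Between A.T (h ^ i • p) (g • v) (h ^ (i + 1) • p) := by
  obtain ⟨m, n, hm, hmn⟩ := hh.exists_conj_zpow_eq_zpow g
  exact exists_between_smul_of_conj_zpow p hv hm hmn

/-- Modulo powers of `h`, every `g` moves a long segment of the axis of `h` into one fixed finite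
segment of that axis; by acylindricity only finitely many elements do so. -/
theorem _root_.SNormal.finiteIndex_zpowers {h : G} (hh : SNormal (Subgroup.zpowers h))
    (hA : A.Acylindrical) (hub : ¬ A.BoundedOrbits) : (Subgroup.zpowers h).FiniteIndex := by
  obtain ⟨p, hp⟩ := hh.exists_mem_axis hA hub
  obtain ⟨k, C, -, hA⟩ := hA
  obtain ⟨q, hq, hpq⟩ : ∃ q ∈ A.axis h, A.T.dist p q = k * A.T.dist p (h • p) :=
    ⟨h ^ (k : ℤ) • p, zpow_smul_mem_axis hp k, dist_zpow_smul hp k⟩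
  have hkpq : k ≤ A.T.dist p q :=
    hpq ▸ Nat.le_mul_of_pos_right k (A.isTree.connected.pos_dist_of_ne hp.1)
  refine finiteIndex_of_forall_exists_mul_mem (hA.finite_setOf_smul_mem hkpq
    (finite_setOf_dist_le_and_exists_between_zpow_smul hp
      (A.T.dist p (h • p) + A.T.dist p q))) fun g => ?_
  obtain ⟨i, hi⟩ := hh.exists_between_smul (g := g) p hp
  have hgp : Between A.T p ((h ^ (-i) * g) • p) (h • p) := by
    rw [← between_smul_iff (h ^ i)]
    simpa only [zpow_neg, mul_smul, smul_inv_smul, zpow_add, zpow_one] using hi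
  have hdist_gp : A.T.dist p ((h ^ (-i) * g) • p) ≤ A.T.dist p (h • p) := by
    unfold Between at hgp
    omega
  have hdist_gq := A.isTree.connected.dist_triangle (u := p) (v := (h ^ (-i) * g) • p)
    (w := (h ^ (-i) * g) • q)
  rw [dist_smul_smul] at hdist_gq
  exact ⟨h ^ (-i), ⟨-i, rfl⟩, ⟨by omega, hh.exists_between_smul p hp⟩,
    ⟨by omega, hh.exists_between_smul p hq⟩⟩

theorem _root_.SNormal.isVirtuallyCyclic {H : Subgroup G} (hH : SNormal H) (hA : A.Acylindrical)
    (hub : ¬ A.BoundedOrbits) (hcyclic : IsVirtuallyCyclic H) : IsVirtuallyCyclic G := by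
  obtain ⟨h, hh⟩ := hcyclic.exists_zpowers_relIndex_ne_zero
  exact ⟨_, (hH.of_relIndex_ne_zero hh).finiteIndex_zpowers hA hub, inferInstance⟩

end TreeAction

theorem sNormal_acylindricallyArboreal_general {G : Type*} [Group G] {A : TreeAction G}
    (hA : A.Acylindrical) (hne : A.NonElementary) {H : Subgroup G} (hH : SNormal H) :
    (A.restrict H).Acylindrical ∧ (A.restrict H).NonElementary :=
  ⟨hA.restrict H, hH.not_boundedOrbits_restrict hA hne.1,
    fun hcyclic => hne.2 (hH.isVirtuallyCyclic hA hne.1 hcyclic)⟩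

/-- If `G` has a non-elementary acylindrical action on a tree and `H ≤ G` is s-normal,
then `H` is acylindrically arboreal; in particular, every finite index subgroup of an
acylindrically arboreal group is acylindrically arboreal. -/
theorem sNormal_acylindricallyArboreal :
    (∀ (G : Type) [Group G] (A : TreeAction G), A.Acylindrical → A.NonElementary →
      ∀ H : Subgroup G, SNormal H → AcylindricallyArboreal H) ∧
    (∀ (G : Type) [Group G], AcylindricallyArboreal G →
      ∀ H : Subgroup G, H.FiniteIndex → AcylindricallyArboreal H) := by
  refine ⟨fun G _ A hA hne H hH =>
    ⟨A.restrict H, sNormal_acylindricallyArboreal_general hA hne hH⟩, ?_⟩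
  rintro G _ ⟨A, hA, hne⟩ H hH
  have : Infinite G := not_finite_iff_infinite.mp fun _ => hne.2 IsVirtuallyCyclic.of_finite
  exact ⟨A.restrict H, sNormal_acylindricallyArboreal_general hA hne SNormal.of_finiteIndex⟩
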